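/- arXiv:2505.18826 — 2 statements merged into one kernel-verified Lean document; each statement's English description precedes it below -/
import Mathlib

section
/- Let j ∈ Fin n and let I ⊆ Fin n be a finite set with j ∉ I, and let I' = (Fin n \ {j}) \ I be its complement in Fin n \ {j}. Then the composition α_{I,j} ∘ α_{I',j} equals the inner automorphism of F_n given by w ↦ x_j⁻¹ · w · x_j. In particular, α_{Fin n \ {j}, j} is the inner automorphism w ↦ x_j⁻¹ · w · x_j. -/
/-- The Whitehead generator `α_{I,j} ∈ Aut(F_n)`: the automorphism of the free group
`FreeGroup (Fin n)` determined on the basis by `x i ↦ x j⁻¹ * x i * x j` for `i ∈ I`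
and `x i ↦ x i` for `i ∉ I`. -/
def whitehead (n : ℕ) (I : Finset (Fin n)) (j : Fin n) : MulAut (FreeGroup (Fin n)) :=
  MonoidHom.toMulEquiv
    (FreeGroup.lift (fun i : Fin n =>
      if i ∈ I then (FreeGroup.of j)⁻¹ * FreeGroup.of i * FreeGroup.of j
      else FreeGroup.of i))
    (FreeGroup.lift (fun i : Fin n =>
      if i ∈ I then FreeGroup.of j * FreeGroup.of i * (FreeGroup.of j)⁻¹
      else FreeGroup.of i))
    (by
      apply FreeGroup.ext_hom
      intro i
      by_cases hi : i ∈ I <;> by_cases hj : j ∈ I <;>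
        simp [hi, hj, FreeGroup.lift_apply_of] <;> group)
    (by
      apply FreeGroup.ext_hom
      intro i
      by_cases hi : i ∈ I <;> by_cases hj : j ∈ I <;>
        simp [hi, hj, FreeGroup.lift_apply_of] <;> group)

theorem whitehead_apply_of (n : ℕ) (I : Finset (Fin n)) (j i : Fin n) :
    whitehead n I j (FreeGroup.of i) =
      if i ∈ I then (FreeGroup.of j)⁻¹ * FreeGroup.of i * FreeGroup.of j
      else FreeGroup.of i := by
  simp [whitehead]

theorem mulAut_ext_of (n : ℕ) (f g : MulAut (FreeGroup (Fin n)))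
    (h : ∀ i, f (FreeGroup.of i) = g (FreeGroup.of i)) : f = g := by
  have : f.toMonoidHom = g.toMonoidHom := FreeGroup.ext_hom _ _ h
  ext x
  exact DFunLike.congr_fun this x

/-- For `j ∉ I` and `I' = (Fin n \ {j}) \ I`, the composition
`α_{I,j} ∘ α_{I',j}` is the inner automorphism `w ↦ x j⁻¹ * w * x j`; in particular
`α_{Fin n \ {j}, j}` is that inner automorphism. -/
theorem whitehead_complement_inner (n : ℕ) (j : Fin n) (I : Finset (Fin n))
    (hjI : j ∉ I) :
    whitehead n I j * whitehead n ((Finset.univ \ {j}) \ I) j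
      = MulAut.conj (FreeGroup.of j)⁻¹ ∧
    whitehead n (Finset.univ \ {j}) j = MulAut.conj (FreeGroup.of j)⁻¹ := by
  constructor
  · apply mulAut_ext_of
    intro i
    by_cases hij : i = j
    · subst hij
      simp [whitehead_apply_of, hjI]
    · by_cases hi : i ∈ I <;> simp [whitehead_apply_of, hjI, hi, hij]
  · apply mulAut_ext_of
    intro i
    by_cases hij : i = j
    · subst hij
      simp [whitehead_apply_of]
    · simp [whitehead_apply_of, hij]
end

section
/- Let n ≥ 2 and let c : Fin n → Fin n → ℤ. For each j ∈ Fin n set φ_j = ∏_{i ≠ j} α_{i,j}^{c(i,j)} (the factors pairwise commute). Then the product ∏_{j} φ_j, taken over j ∈ Fin n in increasing order, is an inner automorphism of F_n if and only if each φ_j is an inner automorphism of F_n, i.e., if and only if for every j the integers c(i,j) for i ≠ j are all equal to each other. -/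
theorem wh_apply (n : ℕ) (I : Finset (Fin n)) (j k : Fin n) :
    whitehead n I j (FreeGroup.of k) =
      if k ∈ I then (FreeGroup.of j)⁻¹ * FreeGroup.of k * FreeGroup.of j else FreeGroup.of k := by
  simp [whitehead]

theorem wh_zpow_fix (n : ℕ) (i j k : Fin n) (h : k ≠ i) (z : ℤ) :
    (whitehead n {i} j ^ z) (FreeGroup.of k) = FreeGroup.of k := by
  have : whitehead n {i} j ∈ MulAction.stabilizer (MulAut (FreeGroup (Fin n))) (FreeGroup.of k) := by
    simp [MulAction.mem_stabilizer_iff, wh_apply, h]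
  have h2 := Subgroup.zpow_mem _ this z
  simpa [MulAction.mem_stabilizer_iff] using h2

theorem wh_zpow_self (n : ℕ) (i j : Fin n) (h : j ≠ i) (z : ℤ) :
    (whitehead n {i} j ^ z) (FreeGroup.of i) =
      (FreeGroup.of j) ^ (-z) * FreeGroup.of i * (FreeGroup.of j) ^ z := by
  have hc : Commute (MulAut.conj (FreeGroup.of j)) (whitehead n {i} j) := by
    ext w
    simp only [MulAut.mul_apply, MulAut.conj_apply, map_mul, map_inv]
    rw [wh_apply]
    simp [h]
  have : MulAut.conj (FreeGroup.of j) * whitehead n {i} j ∈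
      MulAction.stabilizer (MulAut (FreeGroup (Fin n))) (FreeGroup.of i) := by
    simp [MulAction.mem_stabilizer_iff, wh_apply]
    group
  have h2 := Subgroup.zpow_mem _ this z
  rw [hc.mul_zpow, MulAction.mem_stabilizer_iff, ← map_zpow] at h2
  simp only [MulAut.smul_def, MulAut.mul_apply, MulAut.conj_apply] at h2
  generalize (whitehead n {i} j ^ z) (FreeGroup.of i) = y at *
  rw [← h2]
  group

theorem wh_list (n : ℕ) (j : Fin n) (d : ℤ) (L : List (Fin n)) (hj : j ∉ L) (hL : L.Nodup)
    (k : Fin n) :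
    ((L.map (fun i => whitehead n {i} j ^ d)).prod) (FreeGroup.of k) =
      if k ∈ L then (FreeGroup.of j) ^ (-d) * FreeGroup.of k * (FreeGroup.of j) ^ d
      else FreeGroup.of k := by
  induction L with
  | nil => simp
  | cons a L ih =>
    simp only [List.mem_cons, not_or, List.nodup_cons] at hj hL
    simp only [List.map_cons, List.prod_cons, MulAut.mul_apply, ih hj.2 hL.2, List.mem_cons]
    by_cases hk : k = a
    · subst hk
      simp only [hL.1, if_false, true_or, if_true]
      exact wh_zpow_self n k j hj.1 d
    · by_cases hk2 : k ∈ L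
      · simp only [hk, hk2, if_true, or_true, map_mul, map_zpow, wh_zpow_fix n a j k hk,
          wh_zpow_fix n a j j hj.1]
      · simp only [hk, hk2, if_false, or_false, wh_zpow_fix n a j k hk]

theorem phi_inner (n : ℕ) (j : Fin n) (c : Fin n → ℤ) (d : ℤ) (h : ∀ i, i ≠ j → c i = d) :
    (((List.finRange n).filter (fun i => i ≠ j)).map (fun i => whitehead n {i} j ^ c i)).prod
      = MulAut.conj ((FreeGroup.of j) ^ (-d)) := by
  have e : ((List.finRange n).filter (fun i => i ≠ j)).map (fun i => whitehead n {i} j ^ c i) =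
      ((List.finRange n).filter (fun i => i ≠ j)).map (fun i => whitehead n {i} j ^ d) := by
    apply List.map_congr_left
    intro i hi
    rw [h i (by simpa using hi)]
  rw [e]
  apply MulEquiv.toMonoidHom_injective
  apply FreeGroup.ext_hom
  intro k
  have := wh_list n j d ((List.finRange n).filter (fun i => i ≠ j)) (by simp)
    ((List.nodup_finRange n).filter _) k
  simp only [MulEquiv.toMonoidHom_eq_coe, MonoidHom.coe_coe]
  rw [this, MulAut.conj_apply]
  by_cases hk : k = j
  · subst hk
    simp
    group
  · simp [hk]

/-- linear part: x_j maps to 2, other generators to 1 -/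
def expo (n : ℕ) (j : Fin n) : FreeGroup (Fin n) →* ℚˣ :=
  FreeGroup.lift (fun k => if k = j then Units.mk0 2 (by norm_num) else 1)

/-- affine representation -/
def affRep (n : ℕ) (i j : Fin n) : FreeGroup (Fin n) →* Equiv.Perm ℚ :=
  FreeGroup.lift (fun k => if k = j then Equiv.mulLeft₀ 2 (by norm_num)
    else if k = i then Equiv.addRight 1 else 1)

theorem affRep_apply (n : ℕ) (i j : Fin n) (w : FreeGroup (Fin n)) :
    ∃ b : ℚ, ∀ q, affRep n i j w q = (expo n j w : ℚ) * q + b := by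
  induction w using FreeGroup.induction_on with
  | C1 => exact ⟨0, by simp⟩
  | of k =>
    by_cases hj : k = j
    · exact ⟨0, by simp [affRep, expo, hj]⟩
    · by_cases hi : k = i
      · exact ⟨1, by intro q; rw [affRep, expo]; simp [hj]; simp [hi]⟩
      · exact ⟨0, by simp [affRep, expo, hj, hi]⟩
  | inv_of k ih =>
    obtain ⟨b, hb⟩ := ih
    refine ⟨-((expo n j (FreeGroup.of k) : ℚ)⁻¹ * b), fun q => ?_⟩
    rw [map_inv, map_inv, Equiv.Perm.inv_eq_iff_eq, hb]
    have : (expo n j (FreeGroup.of k) : ℚ) ≠ 0 := Units.ne_zero _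
    push_cast
    field_simp
    ring
  | mul x y hx hy =>
    obtain ⟨b, hb⟩ := hx
    obtain ⟨b', hb'⟩ := hy
    refine ⟨(expo n j x : ℚ) * b' + b, fun q => ?_⟩
    rw [map_mul, map_mul, Equiv.Perm.mul_apply, hb', hb]
    push_cast
    ring

theorem expo_unique (n : ℕ) (i j : Fin n) (hij : i ≠ j) (u v : FreeGroup (Fin n))
    (h : u⁻¹ * FreeGroup.of i * u = v⁻¹ * FreeGroup.of i * v) : expo n j u = expo n j v := by
  have hc : (u * v⁻¹) * FreeGroup.of i = FreeGroup.of i * (u * v⁻¹) := by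
    have : u * (u⁻¹ * FreeGroup.of i * u) * v⁻¹ = u * (v⁻¹ * FreeGroup.of i * v) * v⁻¹ := by rw [h]
    simpa [mul_assoc] using this.symm
  obtain ⟨b, hb⟩ := affRep_apply n i j (u * v⁻¹)
  have hx : ∀ q, affRep n i j (FreeGroup.of i) q = q + 1 := by
    intro q; simp [affRep, hij]
  have h2 := congrArg (fun w => affRep n i j w 0) hc
  simp only [map_mul (affRep n i j) (u * v⁻¹), map_mul (affRep n i j) (FreeGroup.of i),
    Equiv.Perm.mul_apply, hx, hb] at h2
  have h3 : (expo n j (u * v⁻¹) : ℚ) = 1 := by linarith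
  have h4 : expo n j (u * v⁻¹) = 1 := Units.ext h3
  rw [map_mul, map_inv, mul_inv_eq_one] at h4
  exact h4

/-- pairs (automorphism, exponent of conjugator) -/
def pairSub (n : ℕ) (i j : Fin n) : Subgroup (MulAut (FreeGroup (Fin n)) × ℚˣ) where
  carrier := {p | (∀ w, expo n j (p.1 w) = expo n j w) ∧
    ∃ w, p.1 (FreeGroup.of i) = w⁻¹ * FreeGroup.of i * w ∧ expo n j w = p.2}
  one_mem' := ⟨by simp, 1, by simp⟩
  mul_mem' := by
    rintro ⟨f, a⟩ ⟨g, b⟩ ⟨h1, u, h2, h3⟩ ⟨h4, v, h5, h6⟩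
    simp only at *
    refine ⟨fun w => by simp [h1, h4], u * f v, ?_, ?_⟩
    · simp [h5, h2, mul_assoc]
    · simp [h1, h3, h6]
  inv_mem' := by
    rintro ⟨f, a⟩ ⟨h1, u, h2, h3⟩
    simp only at *
    have hi : ∀ w, expo n j (f⁻¹ w) = expo n j w := fun w => by
      rw [← h1 (f⁻¹ w), MulAut.apply_inv_self]
    refine ⟨hi, f⁻¹ u⁻¹, ?_, ?_⟩
    · have := congrArg (fun x => f⁻¹ x) h2
      rw [MulAut.inv_apply_self, map_mul, map_mul] at this
      simp only [Prod.fst_inv]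
      rw [map_inv] at this ⊢
      nth_rewrite 2 [this]
      group
    · rw [hi]; simp [h3]

theorem wh_pair (n : ℕ) (i j l k : Fin n) (hlk : l ≠ k) :
    (whitehead n {l} k, if l = i ∧ k = j then Units.mk0 (2:ℚ) (by norm_num) else 1) ∈
      pairSub n i j := by
  refine ⟨fun w => ?_, ?_⟩
  · have : (expo n j).comp (whitehead n {l} k).toMonoidHom = expo n j := by
      apply FreeGroup.ext_hom
      intro m
      simp only [MonoidHom.comp_apply, MulEquiv.toMonoidHom_eq_coe, MonoidHom.coe_coe, wh_apply]
      split_ifs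
      · simp [mul_comm]
      · rfl
    exact DFunLike.congr_fun this w
  · by_cases h : l = i
    · subst h
      exact ⟨FreeGroup.of k, by simp [wh_apply], by simp [expo]⟩
    · exact ⟨1, by simp [wh_apply, Ne.symm h], by simp [h]⟩

theorem prod_pair (n : ℕ) (c : Fin n → Fin n → ℤ) (i j : Fin n) (hij : i ≠ j) :
    ((((List.finRange n).map (fun k => (((List.finRange n).filter (fun l => l ≠ k)).map
        (fun l => whitehead n {l} k ^ c l k)).prod)).prod),
      (Units.mk0 (2:ℚ) (by norm_num)) ^ c i j) ∈ pairSub n i j := by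
  have key : ((List.finRange n).map (fun k => (((List.finRange n).filter (fun l => l ≠ k)).map
        (fun l => (whitehead n {l} k,
          if l = i ∧ k = j then Units.mk0 (2:ℚ) (by norm_num) else 1) ^ c l k)).prod)).prod
        ∈ pairSub n i j := by
    apply Subgroup.list_prod_mem
    intro x hx
    obtain ⟨k, -, rfl⟩ := List.mem_map.1 hx
    apply Subgroup.list_prod_mem
    intro x hx
    obtain ⟨l, hl, rfl⟩ := List.mem_map.1 hx
    exact Subgroup.zpow_mem _ (wh_pair n i j l k (by simpa using hl)) _
  convert key using 1
  apply Prod.ext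
  · rw [← MonoidHom.coe_fst, map_list_prod, List.map_map]
    change List.prod _ = List.prod _
    congr 2
    funext k
    simp only [Function.comp_apply]
    rw [map_list_prod, List.map_map]
    rfl
  · rw [← MonoidHom.coe_snd, map_list_prod, List.map_map]
    have e : ∀ k, (MonoidHom.snd (MulAut (FreeGroup (Fin n))) ℚˣ)
        (((List.finRange n).filter (fun l => l ≠ k)).map
        (fun l => (whitehead n {l} k,
          if l = i ∧ k = j then Units.mk0 (2:ℚ) (by norm_num) else 1) ^ c l k)).prod =
        if k = j then (Units.mk0 (2:ℚ) (by norm_num)) ^ c i j else 1 := by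
      intro k
      rw [map_list_prod, List.map_map]
      rw [← List.prod_toFinset _ ((List.nodup_finRange n).filter _)]
      by_cases hk : k = j
      · subst hk
        rw [Finset.prod_eq_single i]
        · simp
        · intro b _ hb
          simp [hb]
        · intro h
          simp [hij] at h
      · simp [hk]
    have e2 := funext e
    simp only [Function.comp_def]
    rw [e2, ← List.prod_toFinset _ (List.nodup_finRange n)]
    simp

/-- For `n ≥ 2` and `c : Fin n → Fin n → ℤ`, set
`φ j = ∏_{i ≠ j} α_{i,j} ^ (c i j)` (the factors pairwise commute). The product
`∏ j φ j`, over `j ∈ Fin n` in increasing order, is inner if and only if every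
`φ j` is inner, if and only if for each `j` the integers `c i j` for `i ≠ j`
are all equal to each other. -/
theorem prod_prod_whitehead_inner_iff (n : ℕ) (hn : 2 ≤ n) (c : Fin n → Fin n → ℤ) :
    let φ : Fin n → MulAut (FreeGroup (Fin n)) := fun j =>
      ((((List.finRange n).filter (fun i => i ≠ j)).map
        (fun i => whitehead n {i} j ^ c i j)).prod)
    ((((List.finRange n).map φ).prod
        ∈ Set.range (MulAut.conj : FreeGroup (Fin n) →* MulAut (FreeGroup (Fin n))))
      ↔ ∀ j : Fin n,
          φ j ∈ Set.range (MulAut.conj : FreeGroup (Fin n) →* MulAut (FreeGroup (Fin n))))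
    ∧ ((((List.finRange n).map φ).prod
        ∈ Set.range (MulAut.conj : FreeGroup (Fin n) →* MulAut (FreeGroup (Fin n))))
      ↔ ∀ j : Fin n, ∀ i i' : Fin n, i ≠ j → i' ≠ j → c i j = c i' j) := by
  intro φ
  have h1 : (∀ j : Fin n,
      φ j ∈ Set.range (MulAut.conj : FreeGroup (Fin n) →* MulAut (FreeGroup (Fin n)))) →
      (((List.finRange n).map φ).prod
        ∈ Set.range (MulAut.conj : FreeGroup (Fin n) →* MulAut (FreeGroup (Fin n)))) := by
    intro h
    rw [← MonoidHom.coe_range, SetLike.mem_coe]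
    apply Subgroup.list_prod_mem
    intro x hx
    obtain ⟨k, -, rfl⟩ := List.mem_map.1 hx
    exact h k
  have h2 : (∀ j : Fin n, ∀ i i' : Fin n, i ≠ j → i' ≠ j → c i j = c i' j) → ∀ j : Fin n,
      φ j ∈ Set.range (MulAut.conj : FreeGroup (Fin n) →* MulAut (FreeGroup (Fin n))) := by
    intro h j
    have : Nontrivial (Fin n) := Fin.nontrivial_iff_two_le.2 hn
    obtain ⟨i', hi'⟩ := exists_ne j
    exact ⟨_, (phi_inner n j (fun i => c i j) (c i' j) (fun i hi => h j i i' hi hi')).symm⟩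
  have h3 : (((List.finRange n).map φ).prod
        ∈ Set.range (MulAut.conj : FreeGroup (Fin n) →* MulAut (FreeGroup (Fin n)))) →
      ∀ j : Fin n, ∀ i i' : Fin n, i ≠ j → i' ≠ j → c i j = c i' j := by
    rintro ⟨g, hg⟩ j
    have key : ∀ i, i ≠ j → (Units.mk0 (2:ℚ) (by norm_num)) ^ c i j = expo n j g⁻¹ := by
      intro i hi
      obtain ⟨-, w, hw, hw2⟩ := prod_pair n c i j hi
      change ((List.finRange n).map φ).prod (FreeGroup.of i) = _ at hw
      rw [← hg] at hw
      refine hw2.symm.trans ?_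
      apply expo_unique n i j hi
      rw [← hw]
      simp
    intro i i' hi hi'
    have h := (key i hi).trans (key i' hi').symm
    have h' := congrArg (fun u : ℚˣ => (u : ℚ)) h
    simp only [Units.val_zpow_eq_zpow_val, Units.val_mk0] at h'
    exact zpow_right_injective₀ (by norm_num) (by norm_num) h'
  exact ⟨⟨fun h => h2 (h3 h), h1⟩, ⟨h3, fun h => h1 (h2 h)⟩⟩
end
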